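/- Let k be an algebraically closed field and n a natural number. Let V_0 and W_0 be (n+1)-dimensional subspaces of k^{n+2} and let φ : V_0 → W_0 be a k-linear isomorphism such that φ(v) does not lie in the span of v for any nonzero v ∈ V_0. Define inductively W_i = φ(V_i) and V_{i+1} = V_i ∩ W_i. Then for every i with 0 ≤ i ≤ n+1 the subspace V_i has dimension exactly n+1−i; in particular V_{i+1} is strictly contained in V_i for 0 ≤ i ≤ n. -/

import Mathlib

/-!
Write `W_i = φ(V_i)`. For `i ≥ 1` both `V_i` and `W_i` lie in `W_{i-1}`, so
`dim V_i + dim W_i - dim (V_i ∩ W_i) ≤ dim W_{i-1}`; since `φ` preserves dimensions, each drop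
`dim V_i - dim V_{i+1}` is at most the preceding one, and the first is at most the codimension of
`V_0`, which is one. The drops cannot vanish before `V_i` does: if `V_{i+1} = V_i`, then
`V_i = W_i` is stable under `φ`, and over an algebraically closed field a nonzero stable subspace
contains an eigenvector.
-/

open Module

section Flag

variable {R M : Type*} [Semiring R] [AddCommMonoid M] [Module R M] {D : Submodule R M}

/-- The image of a submodule `S` of `M` under a linear map `f` that is defined only on `D`,
i.e. `f(S ∩ D)`. -/
def partialImage (f : D →ₗ[R] M) (S : Submodule R M) : Submodule R M :=
  (S.comap D.subtype).map f

/-- The flag `V_0 = D`, `V_{i+1} = V_i ∩ f(V_i)` of a linear map `f` defined on `D`; it consists of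
submodules of the ambient module `M`. -/
def imageFlag (f : D →ₗ[R] M) : ℕ → Submodule R M
  | 0 => D
  | i + 1 => imageFlag f i ⊓ partialImage f (imageFlag f i)

lemma imageFlag_zero (f : D →ₗ[R] M) : imageFlag f 0 = D := rfl

lemma apply_mem_partialImage (f : D →ₗ[R] M) {S : Submodule R M} {v : D} (hv : (v : M) ∈ S) :
    f v ∈ partialImage f S :=
  Submodule.mem_map_of_mem hv

lemma partialImage_mono (f : D →ₗ[R] M) : Monotone (partialImage f) :=
  fun _ _ h => Submodule.map_mono (Submodule.comap_mono h)

lemma imageFlag_antitone (f : D →ₗ[R] M) : Antitone (imageFlag f) :=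
  antitone_nat_of_succ_le fun _ => inf_le_left

lemma imageFlag_le_domain (f : D →ₗ[R] M) (i : ℕ) : imageFlag f i ≤ D :=
  imageFlag_antitone f i.zero_le

lemma eq_imageFlag {f : D →ₗ[R] M} {V : ℕ → Submodule R M} (h_zero : V 0 = D)
    (h_succ : ∀ i, V (i + 1) = V i ⊓ partialImage f (V i)) : V = imageFlag f := by
  funext i
  induction i with
  | zero => exact h_zero
  | succ i ih => rw [h_succ, ih, imageFlag]

lemma finrank_partialImage {f : D →ₗ[R] M} (hf : Function.Injective f) {S : Submodule R M}
    (hS : S ≤ D) : finrank R (partialImage f S) = finrank R S :=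
  ((Submodule.equivMapOfInjective f hf _).symm ≪≫ₗ
    Submodule.comapSubtypeEquivOfLe hS).finrank_eq

end Flag

lemma injective_of_apply_notMem_span {R M : Type*} [Ring R] [AddCommGroup M] [Module R M]
    {D : Submodule R M} {f : D →ₗ[R] M}
    (hf : ∀ v : D, v ≠ 0 → f v ∉ Submodule.span R {(v : M)}) : Function.Injective f := by
  rw [injective_iff_map_eq_zero]
  intro v hv
  by_contra h_ne
  exact hf v h_ne (hv ▸ Submodule.zero_mem _)

section Dimension

variable {K E : Type*} [DivisionRing K] [AddCommGroup E] [Module K E] {D : Submodule K E}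
  {f : D →ₗ[K] E}

instance partialImage.finiteDimensional (S : Submodule K E) [FiniteDimensional K S] :
    FiniteDimensional K (partialImage f S) :=
  have : FiniteDimensional K (S.comap D.subtype) :=
    .of_injective (D.subtype.submoduleComap S)
      fun _ _ h => Subtype.ext (Subtype.ext (congrArg (fun v : S => (v : E)) h))
  inferInstanceAs (FiniteDimensional K ((S.comap D.subtype).map f))

lemma two_mul_finrank_le_add_finrank_inf_partialImage (hf : Function.Injective f)
    {S U : Submodule K E} [FiniteDimensional K U] (hSD : S ≤ D) (hSU : S ≤ U)
    (h_image : partialImage f S ≤ U) :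
    2 * finrank K S ≤ finrank K U + finrank K ↥(S ⊓ partialImage f S) := by
  have : FiniteDimensional K S := Submodule.finiteDimensional_of_le hSU
  calc 2 * finrank K S = finrank K S + finrank K (partialImage f S) := by
        rw [finrank_partialImage hf hSD, two_mul]
    _ = finrank K ↥(S ⊔ partialImage f S) + finrank K ↥(S ⊓ partialImage f S) :=
        (Submodule.finrank_sup_add_finrank_inf_eq _ _).symm
    _ ≤ finrank K U + finrank K ↥(S ⊓ partialImage f S) :=
        Nat.add_le_add_right (Submodule.finrank_mono (sup_le hSU h_image)) _

variable [FiniteDimensional K D]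

instance imageFlag.finiteDimensional (i : ℕ) : FiniteDimensional K (imageFlag f i) :=
  Submodule.finiteDimensional_of_le (imageFlag_le_domain f i)

lemma two_mul_finrank_domain_le (hf : Function.Injective f) :
    2 * finrank K D ≤ finrank K ↥(D ⊔ f.range) + finrank K (imageFlag f 1) :=
  two_mul_finrank_le_add_finrank_inf_partialImage hf le_rfl le_sup_left
    (LinearMap.map_le_range.trans le_sup_right)

lemma two_mul_finrank_imageFlag_succ_le (hf : Function.Injective f) (i : ℕ) :
    2 * finrank K (imageFlag f (i + 1)) ≤
      finrank K (imageFlag f i) + finrank K (imageFlag f (i + 2)) := by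
  rw [← finrank_partialImage hf (imageFlag_le_domain f i)]
  exact two_mul_finrank_le_add_finrank_inf_partialImage hf (imageFlag_le_domain f (i + 1))
    inf_le_right (partialImage_mono f inf_le_left)

lemma finrank_imageFlag_le_succ_add_one (hf : Function.Injective f)
    (hD : finrank K ↥(D ⊔ f.range) ≤ finrank K D + 1) (i : ℕ) :
    finrank K (imageFlag f i) ≤ finrank K (imageFlag f (i + 1)) + 1 := by
  induction i with
  | zero =>
    have := two_mul_finrank_domain_le hf
    rw [imageFlag_zero, zero_add]
    lia
  | succ i ih =>
    have := two_mul_finrank_imageFlag_succ_le hf i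
    lia

end Dimension

section IsAlgClosed

variable {K E : Type*} [Field K] [IsAlgClosed K] [AddCommGroup E] [Module K E]
  {D : Submodule K E} {f : D →ₗ[K] E}

lemma exists_apply_mem_span_of_invariant {S : Submodule K E} [FiniteDimensional K S]
    (hSD : S ≤ D) (hS : S ≠ ⊥) (h_inv : ∀ v : D, (v : E) ∈ S → f v ∈ S) :
    ∃ v : D, v ≠ 0 ∧ f v ∈ Submodule.span K {(v : E)} := by
  have : Nontrivial S := Submodule.nontrivial_iff_ne_bot.mpr hS
  let g : End K S :=
    (f ∘ₗ Submodule.inclusion hSD).codRestrict S fun v => h_inv (Submodule.inclusion hSD v) v.2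
  obtain ⟨c, hc⟩ := End.exists_eigenvalue g
  obtain ⟨v, hv⟩ := hc.exists_hasEigenvector
  have h_eigen : f (Submodule.inclusion hSD v) = c • (v : E) :=
    congrArg Subtype.val hv.apply_eq_smul
  exact ⟨Submodule.inclusion hSD v,
    (map_ne_zero_iff _ (Submodule.inclusion_injective hSD)).mpr hv.2,
    Submodule.mem_span_singleton.mpr ⟨c, h_eigen.symm⟩⟩

lemma eq_bot_of_le_partialImage (hf : ∀ v : D, v ≠ 0 → f v ∉ Submodule.span K {(v : E)})
    {S : Submodule K E} [FiniteDimensional K S] (hSD : S ≤ D) (h_le : S ≤ partialImage f S) :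
    S = ⊥ := by
  have h_eq : S = partialImage f S := Submodule.eq_of_le_of_finrank_eq h_le
    (finrank_partialImage (injective_of_apply_notMem_span hf) hSD).symm
  by_contra hS
  obtain ⟨v, hv, h_mem⟩ := exists_apply_mem_span_of_invariant hSD hS
    fun v hv => h_eq.ge (apply_mem_partialImage f hv)
  exact hf v hv h_mem

variable [FiniteDimensional K D]

lemma imageFlag_succ_lt (hf : ∀ v : D, v ≠ 0 → f v ∉ Submodule.span K {(v : E)}) {i : ℕ}
    (hi : imageFlag f i ≠ ⊥) : imageFlag f (i + 1) < imageFlag f i :=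
  inf_lt_left.mpr fun h_le => hi (eq_bot_of_le_partialImage hf (imageFlag_le_domain f i) h_le)

theorem flag_drops_by_one_general (hD : finrank K ↥(D ⊔ f.range) ≤ finrank K D + 1)
    (hf : ∀ v : D, v ≠ 0 → f v ∉ Submodule.span K {(v : E)}) :
    (∀ i ≤ finrank K D, finrank K (imageFlag f i) = finrank K D - i) ∧
      (∀ i < finrank K D, imageFlag f (i + 1) < imageFlag f i) := by
  have h_strict (i : ℕ) (hi : 0 < finrank K (imageFlag f i)) :
      imageFlag f (i + 1) < imageFlag f i :=
    imageFlag_succ_lt hf (Submodule.one_le_finrank_iff.mp hi)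
  have h_finrank (i : ℕ) (hi : i ≤ finrank K D) :
      finrank K (imageFlag f i) = finrank K D - i := by
    induction i with
    | zero => rfl
    | succ i ih =>
      have h_dim := ih (by lia)
      have h_lower := finrank_imageFlag_le_succ_add_one (injective_of_apply_notMem_span hf) hD i
      have h_upper := Submodule.finrank_lt_finrank_of_lt (h_strict i (by lia))
      lia
  exact ⟨h_finrank, fun i hi => h_strict i (by rw [h_finrank i hi.le]; lia)⟩

end IsAlgClosed

/-- Let `V_0, W_0` be hyperplanes of `k^{n+2}` (`k` algebraically closed) and
`φ : V_0 ≃ W_0` a linear isomorphism with `φ(v) ∉ span{v}` for every nonzero `v ∈ V_0`.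
Setting `W_i = φ(V_i)` and `V_{i+1} = V_i ⊓ W_i`, the subspace `V_i` has dimension
exactly `n+1-i` for `0 ≤ i ≤ n+1`; in particular `V_{i+1} ⊊ V_i` for `0 ≤ i ≤ n`. -/
theorem flag_drops_by_one (k : Type*) [Field k] [IsAlgClosed k] (n : ℕ)
    (V0 W0 : Submodule k (Fin (n + 2) → k))
    (hV0dim : Module.finrank k ↥V0 = n + 1) (hW0dim : Module.finrank k ↥W0 = n + 1)
    (φ : V0 ≃ₗ[k] W0)
    (hφ : ∀ v : V0, (v : Fin (n + 2) → k) ≠ 0 →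
      ((φ v : Fin (n + 2) → k)) ∉ Submodule.span k {(v : Fin (n + 2) → k)})
    (V : ℕ → Submodule k (Fin (n + 2) → k))
    (hV₀ : V 0 = V0)
    (hVsucc : ∀ i, V (i + 1) = V i ⊓
      Submodule.map (W0.subtype.comp φ.toLinearMap) (Submodule.comap V0.subtype (V i))) :
    (∀ i ≤ n + 1, Module.finrank k ↥(V i) = n + 1 - i) ∧
      (∀ i ≤ n, V (i + 1) < V i) := by
  obtain rfl : V = imageFlag (W0.subtype ∘ₗ φ.toLinearMap) := eq_imageFlag hV₀ hVsucc
  have h_codim : Module.finrank k ↥(V0 ⊔ (W0.subtype ∘ₗ φ.toLinearMap).range) ≤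
      Module.finrank k V0 + 1 := by
    simpa [hV0dim] using Submodule.finrank_le (V0 ⊔ (W0.subtype ∘ₗ φ.toLinearMap).range)
  simpa only [hV0dim, Nat.lt_succ_iff] using
    flag_drops_by_one_general h_codim fun v hv => hφ v (by simpa using hv)
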